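/- Expression soundness and totality: If Γ ⊢ e : τ and the store σ is well-typed for Γ (σ ⊨ Γ), then there exists a value v such that σ ⊢ e ⇓ v and v has type τ (v is an integer if τ = Int, and a boolean if τ = Bool). -/

import Mathlib

inductive Ty : Type
  | int
  | bool
deriving DecidableEq

inductive Expr : Type
  | int (n : ℤ)
  | tt
  | ff
  | var (x : String)
  | plus (e₁ e₂ : Expr)
  | isOp (e₁ e₂ : Expr)

inductive Val : Type
  | int (n : ℤ)
  | bool (b : Bool)

/-- A value has a type: integer values have type `Int`, booleans have type `Bool`. -/
inductive ValHasTy : Val → Ty → Prop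
  | int (n : ℤ) : ValHasTy (.int n) .int
  | bool (b : Bool) : ValHasTy (.bool b) .bool

/-- Typing contexts: finite maps from variables to types. -/
def Ctx : Type := String → Option Ty

/-- Stores: partial maps from variables to values. -/
def Store : Type := String → Option Val

/-- Expression typing `Γ ⊢ e : τ`. -/
inductive HasTy : Ctx → Expr → Ty → Prop
  | int (Γ : Ctx) (n : ℤ) : HasTy Γ (.int n) .int
  | tt (Γ : Ctx) : HasTy Γ .tt .bool
  | ff (Γ : Ctx) : HasTy Γ .ff .bool
  | var (Γ : Ctx) (x : String) (τ : Ty) : Γ x = some τ → HasTy Γ (.var x) τ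
  | plus (Γ : Ctx) (e₁ e₂ : Expr) :
      HasTy Γ e₁ .int → HasTy Γ e₂ .int → HasTy Γ (.plus e₁ e₂) .int
  | rel (Γ : Ctx) (e₁ e₂ : Expr) (τ : Ty) :
      HasTy Γ e₁ τ → HasTy Γ e₂ τ → HasTy Γ (.isOp e₁ e₂) .bool

inductive Stmt : Type
  | skip
  | letBe (x : String) (e : Expr)
  | ifThenElse (e : Expr) (s₁ s₂ : Stmt)
  | print (e : Expr)
  | seq (s₁ s₂ : Stmt)

/-- Statement typing `Γ ⊢ S ⇒ Γ'`. -/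
inductive StmtTy : Ctx → Stmt → Ctx → Prop
  | skip (Γ : Ctx) : StmtTy Γ .skip Γ
  | letBe (Γ : Ctx) (x : String) (e : Expr) (τ : Ty) :
      HasTy Γ e τ → StmtTy Γ (.letBe x e) (fun y => if y = x then some τ else Γ y)
  | ifThenElse (Γ : Ctx) (e : Expr) (s₁ s₂ : Stmt) :
      HasTy Γ e .bool → StmtTy Γ s₁ Γ → StmtTy Γ s₂ Γ →
      StmtTy Γ (.ifThenElse e s₁ s₂) Γ
  | print (Γ : Ctx) (e : Expr) (τ : Ty) : HasTy Γ e τ → StmtTy Γ (.print e) Γ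
  | seq (Γ Γ' Γ'' : Ctx) (s₁ s₂ : Stmt) :
      StmtTy Γ s₁ Γ' → StmtTy Γ' s₂ Γ'' → StmtTy Γ (.seq s₁ s₂) Γ''

/-- Big-step expression evaluation `σ ⊢ e ⇓ v`. -/
inductive Eval : Store → Expr → Val → Prop
  | int (σ : Store) (n : ℤ) : Eval σ (.int n) (.int n)
  | tt (σ : Store) : Eval σ .tt (.bool true)
  | ff (σ : Store) : Eval σ .ff (.bool false)
  | var (σ : Store) (x : String) (v : Val) : σ x = some v → Eval σ (.var x) v
  | plus (σ : Store) (e₁ e₂ : Expr) (n₁ n₂ : ℤ) :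
      Eval σ e₁ (.int n₁) → Eval σ e₂ (.int n₂) →
      Eval σ (.plus e₁ e₂) (.int (n₁ + n₂))
  | isInt (σ : Store) (e₁ e₂ : Expr) (n₁ n₂ : ℤ) :
      Eval σ e₁ (.int n₁) → Eval σ e₂ (.int n₂) →
      Eval σ (.isOp e₁ e₂) (.bool (n₁ == n₂))
  | isBool (σ : Store) (e₁ e₂ : Expr) (b₁ b₂ : Bool) :
      Eval σ e₁ (.bool b₁) → Eval σ e₂ (.bool b₂) →
      Eval σ (.isOp e₁ e₂) (.bool (b₁ == b₂))

/-- Small-step statement semantics `⟨S, σ⟩ ↝ ⟨S', σ'⟩`. -/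
inductive Step : Stmt → Store → Stmt → Store → Prop
  | letBe (σ : Store) (x : String) (e : Expr) (v : Val) :
      Eval σ e v → Step (.letBe x e) σ .skip (fun y => if y = x then some v else σ y)
  | ifTrue (σ : Store) (e : Expr) (s₁ s₂ : Stmt) :
      Eval σ e (.bool true) → Step (.ifThenElse e s₁ s₂) σ s₁ σ
  | ifFalse (σ : Store) (e : Expr) (s₁ s₂ : Stmt) :
      Eval σ e (.bool false) → Step (.ifThenElse e s₁ s₂) σ s₂ σ
  | print (σ : Store) (e : Expr) (v : Val) : Eval σ e v → Step (.print e) σ .skip σ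
  | seqSkip (σ : Store) (s₂ : Stmt) : Step (.seq .skip s₂) σ s₂ σ
  | seqStep (σ σ' : Store) (s₁ s₁' s₂ : Stmt) :
      Step s₁ σ s₁' σ' → Step (.seq s₁ s₂) σ (.seq s₁' s₂) σ'

/-- `σ ⊨ Γ`: the store is well-typed for the context. -/
def StoreTy (σ : Store) (Γ : Ctx) : Prop :=
  ∀ x τ, Γ x = some τ → ∃ v, σ x = some v ∧ ValHasTy v τ

/-- The empty typing context. -/
def emptyCtx : Ctx := fun _ => none

/-- Semantic typing of an expression in a fixed store: `e` evaluates in `σ` to some value of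
type `τ`. Typing is sound because, when `σ` is well-typed for the context, this relation is closed
under every rule of `HasTy`. -/
def EvalsToTy (σ : Store) (e : Expr) (τ : Ty) : Prop :=
  ∃ v, Eval σ e v ∧ ValHasTy v τ

section

variable {Γ : Ctx} {σ : Store} {e e₁ e₂ : Expr} {x : String} {τ : Ty}

theorem StoreTy.evalsToTy_var (hσ : StoreTy σ Γ) (hx : Γ x = some τ) :
    EvalsToTy σ (.var x) τ := by
  obtain ⟨v, hxv, hv⟩ := hσ x τ hx
  exact ⟨v, .var σ x v hxv, hv⟩

namespace EvalsToTy

theorem int_iff : EvalsToTy σ e .int ↔ ∃ n, Eval σ e (.int n) where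
  mp := fun ⟨.int n, he, _⟩ => ⟨n, he⟩
  mpr := fun ⟨n, he⟩ => ⟨.int n, he, .int n⟩

theorem bool_iff : EvalsToTy σ e .bool ↔ ∃ b, Eval σ e (.bool b) where
  mp := fun ⟨.bool b, he, _⟩ => ⟨b, he⟩
  mpr := fun ⟨b, he⟩ => ⟨.bool b, he, .bool b⟩

theorem plus (h₁ : EvalsToTy σ e₁ .int) (h₂ : EvalsToTy σ e₂ .int) :
    EvalsToTy σ (.plus e₁ e₂) .int := by
  obtain ⟨n₁, he₁⟩ := int_iff.mp h₁
  obtain ⟨n₂, he₂⟩ := int_iff.mp h₂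
  exact int_iff.mpr ⟨n₁ + n₂, .plus σ e₁ e₂ n₁ n₂ he₁ he₂⟩

theorem isOp (h₁ : EvalsToTy σ e₁ τ) (h₂ : EvalsToTy σ e₂ τ) :
    EvalsToTy σ (.isOp e₁ e₂) .bool := by
  cases τ with
  | int =>
    obtain ⟨n₁, he₁⟩ := int_iff.mp h₁
    obtain ⟨n₂, he₂⟩ := int_iff.mp h₂
    exact bool_iff.mpr ⟨n₁ == n₂, .isInt σ e₁ e₂ n₁ n₂ he₁ he₂⟩
  | bool =>
    obtain ⟨b₁, he₁⟩ := bool_iff.mp h₁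
    obtain ⟨b₂, he₂⟩ := bool_iff.mp h₂
    exact bool_iff.mpr ⟨b₁ == b₂, .isBool σ e₁ e₂ b₁ b₂ he₁ he₂⟩

end EvalsToTy

end

/-- **Expression soundness and totality**: a well-typed expression evaluates,
in any store well-typed for the context, to a value of its type. -/
theorem expr_soundness (Γ : Ctx) (e : Expr) (τ : Ty) (σ : Store)
    (hty : HasTy Γ e τ) (hσ : StoreTy σ Γ) :
    ∃ v : Val, Eval σ e v ∧ ValHasTy v τ := by
  change EvalsToTy σ e τ
  induction hty with
  | int n => exact EvalsToTy.int_iff.mpr ⟨n, .int σ n⟩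
  | tt => exact EvalsToTy.bool_iff.mpr ⟨true, .tt σ⟩
  | ff => exact EvalsToTy.bool_iff.mpr ⟨false, .ff σ⟩
  | var x τ hx => exact hσ.evalsToTy_var hx
  | plus e₁ e₂ _ _ ih₁ ih₂ => exact ih₁.plus ih₂
  | rel e₁ e₂ τ _ _ ih₁ ih₂ => exact ih₁.isOp ih₂
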